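/- Let G be a graph with arranged degree sequence d_1 ≥ ... ≥ d_n and let k = ν(G) be its matching number. Then 2(d_1 + ... + d_k) + (d_{k+1} + ... + d_{2k}) ≥ 2m(G). -/

import Mathlib

open scoped Classical

/-- `M` is a matching in `G`, represented as a finite set of edges. -/
def IsMatchingSet {V : Type*} (G : SimpleGraph V) (M : Finset (Sym2 V)) : Prop :=
  (∀ e ∈ M, e ∈ G.edgeSet) ∧
  ∀ e ∈ M, ∀ f ∈ M, e ≠ f → ∀ v : V, ¬(v ∈ e ∧ v ∈ f)

/-- `M` is a maximal matching in `G`. -/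
def IsMaximalMatchingSet {V : Type*} (G : SimpleGraph V) (M : Finset (Sym2 V)) : Prop :=
  IsMatchingSet G M ∧ ∀ e ∈ G.edgeSet, e ∉ M → ¬ IsMatchingSet G (insert e M)

/-- The set `V_M` of vertices covered (matched) by the matching `M`. -/
noncomputable def matchedSet {V : Type*} [Fintype V] (M : Finset (Sym2 V)) : Finset V :=
  Finset.univ.filter (fun v => ∃ e ∈ M, v ∈ e)

lemma top_sum_le {n : ℕ} (d : Fin n → ℕ) (hd : Antitone d) (k : ℕ) (T : Finset (Fin n))
    (hT : T.card ≤ k) :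
    ∑ i ∈ T, d i ≤ ∑ i ∈ Finset.univ.filter (fun i : Fin n => (i : ℕ) < k), d i := by
  set A := Finset.univ.filter (fun i : Fin n => (i : ℕ) < k) with hA
  by_cases hk : n ≤ k
  · apply Finset.sum_le_sum_of_subset
    intro i _
    simp only [hA, Finset.mem_filter, Finset.mem_univ, true_and]
    omega
  · push Not at hk
    have hAc : A.card = k := by
      have : A = Finset.Iio (⟨k, hk⟩ : Fin n) := by
        ext i; simp [hA, Fin.lt_def]
      rw [this, Fin.card_Iio]
    have h1 : (T \ A).card ≤ (A \ T).card := by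
      have := Finset.card_sdiff_add_card_inter T A
      have := Finset.card_sdiff_add_card_inter A T
      rw [Finset.inter_comm] at this
      omega
    have h2 : ∑ i ∈ T \ A, d i ≤ (T \ A).card * d ⟨k, hk⟩ := by
      rw [← smul_eq_mul]
      apply Finset.sum_le_card_nsmul
      intro i hi
      apply hd
      simp [hA] at hi
      exact hi.2
    have h3 : (A \ T).card * d ⟨k, hk⟩ ≤ ∑ i ∈ A \ T, d i := by
      rw [← smul_eq_mul]
      apply Finset.card_nsmul_le_sum
      intro i hi
      apply hd
      simp [hA] at hi
      exact Fin.le_def.2 hi.1.le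
    have h4 : (T \ A).card * d ⟨k, hk⟩ ≤ (A \ T).card * d ⟨k, hk⟩ := Nat.mul_le_mul_right _ h1
    have e1 := Finset.sum_inter_add_sum_sdiff T A d
    have e2 := Finset.sum_inter_add_sum_sdiff A T d
    rw [Finset.inter_comm] at e2
    omega

lemma top_deg_le {V : Type*} [Fintype V] {n : ℕ} (G : SimpleGraph V)
    (d : Fin n → ℕ) (hd : Antitone d)
    (σ : Fin n ≃ V) (hσ : ∀ i, G.degree (σ i) = d i) (k : ℕ) (S : Finset V) (hS : S.card ≤ k) :
    ∑ v ∈ S, G.degree v ≤ ∑ i ∈ Finset.univ.filter (fun i : Fin n => (i : ℕ) < k), d i := by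
  have := top_sum_le d hd k (S.map σ.symm.toEmbedding) (by simpa using hS)
  rw [Finset.sum_map] at this
  have hv : ∀ v, d (σ.symm v) = G.degree v := by
    intro v
    obtain ⟨i, rfl⟩ := σ.surjective v
    rw [hσ, Equiv.symm_apply_apply]
  simpa only [Equiv.coe_toEmbedding, hv] using this

lemma uncovered_indep {V : Type*} [Fintype V] (G : SimpleGraph V)
    (M : Finset (Sym2 V)) (hM : IsMatchingSet G M)
    (hmax : ∀ M' : Finset (Sym2 V), IsMatchingSet G M' → M'.card ≤ M.card)
    (u v : V) (hu : u ∉ matchedSet M) (hv : v ∉ matchedSet M) : ¬ G.Adj u v := by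
  intro h
  simp only [matchedSet, Finset.mem_filter, Finset.mem_univ, true_and, not_exists, not_and] at hu hv
  have hn : s(u, v) ∉ M := fun hh => hu _ hh (Sym2.mem_mk_left u v)
  have := hmax (insert s(u, v) M) (by
    refine ⟨?_, ?_⟩
    · intro e he
      rcases Finset.mem_insert.1 he with rfl | he
      · exact h
      · exact hM.1 e he
    · intro e he f hf hef w hw
      rcases Finset.mem_insert.1 he with rfl | he2 <;> rcases Finset.mem_insert.1 hf with rfl | hf2
      · exact hef rfl
      · rcases Sym2.mem_iff.1 hw.1 with rfl | rfl
        · exact hu _ hf2 hw.2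
        · exact hv _ hf2 hw.2
      · rcases Sym2.mem_iff.1 hw.2 with rfl | rfl
        · exact hu _ he2 hw.1
        · exact hv _ he2 hw.1
      · exact hM.2 e he2 f hf2 hef w hw)
  rw [Finset.card_insert_of_notMem hn] at this
  omega

lemma no_augment {V : Type*} [Fintype V] (G : SimpleGraph V)
    (M : Finset (Sym2 V)) (hM : IsMatchingSet G M)
    (hmax : ∀ M' : Finset (Sym2 V), IsMatchingSet G M' → M'.card ≤ M.card)
    (x y u v : V) (hxy : s(x, y) ∈ M) (hu : u ∉ matchedSet M) (hv : v ∉ matchedSet M)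
    (hxu : G.Adj x u) (hyv : G.Adj y v) : u = v := by
  by_contra huv
  simp only [matchedSet, Finset.mem_filter, Finset.mem_univ, true_and, not_exists, not_and] at hu hv
  have hne : x ≠ y := (show G.Adj x y from hM.1 _ hxy).ne
  have hx : ∀ e ∈ M, x ∈ e → e = s(x, y) := fun e he hxe => by
    by_contra hc
    exact hM.2 e he _ hxy hc x ⟨hxe, Sym2.mem_mk_left x y⟩
  have hy : ∀ e ∈ M, y ∈ e → e = s(x, y) := fun e he hxe => by
    by_contra hc
    exact hM.2 e he _ hxy hc y ⟨hxe, Sym2.mem_mk_right x y⟩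
  have hux : u ≠ x := fun h => hu _ hxy (h ▸ Sym2.mem_mk_left x y)
  have huy : u ≠ y := fun h => hu _ hxy (h ▸ Sym2.mem_mk_right x y)
  have hvx : v ≠ x := fun h => hv _ hxy (h ▸ Sym2.mem_mk_left x y)
  have hvy : v ≠ y := fun h => hv _ hxy (h ▸ Sym2.mem_mk_right x y)
  have h1 : ∀ f ∈ M.erase s(x, y), ∀ w, ¬ (w ∈ s(x, u) ∧ w ∈ f) := by
    rintro f hf w ⟨hw, hwf⟩
    obtain ⟨hf1, hf2⟩ := Finset.mem_erase.1 hf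
    rcases Sym2.mem_iff.1 hw with rfl | rfl
    · exact hf1 (hx f hf2 hwf)
    · exact hu f hf2 hwf
  have h2 : ∀ f ∈ M.erase s(x, y), ∀ w, ¬ (w ∈ s(y, v) ∧ w ∈ f) := by
    rintro f hf w ⟨hw, hwf⟩
    obtain ⟨hf1, hf2⟩ := Finset.mem_erase.1 hf
    rcases Sym2.mem_iff.1 hw with rfl | rfl
    · exact hf1 (hy f hf2 hwf)
    · exact hv f hf2 hwf
  have h3 : ∀ w, ¬ (w ∈ s(x, u) ∧ w ∈ s(y, v)) := by
    rintro w ⟨ha, hb⟩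
    rcases Sym2.mem_iff.1 ha with rfl | rfl <;> rcases Sym2.mem_iff.1 hb with h | h
    · exact hne h
    · exact hvx h.symm
    · exact huy h
    · exact huv h
  have n2 : s(y, v) ∉ M.erase s(x, y) := fun h => h2 _ h y ⟨Sym2.mem_mk_left y v, Sym2.mem_mk_left y v⟩
  have n1 : s(x, u) ∉ insert s(y, v) (M.erase s(x, y)) := fun h => by
    rcases Finset.mem_insert.1 h with h | h
    · exact h3 x ⟨Sym2.mem_mk_left x u, h ▸ Sym2.mem_mk_left x u⟩
    · exact h1 _ h x ⟨Sym2.mem_mk_left x u, Sym2.mem_mk_left x u⟩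
  have := hmax (insert s(x, u) (insert s(y, v) (M.erase s(x, y)))) (by
    refine ⟨?_, ?_⟩
    · intro e he
      rcases Finset.mem_insert.1 he with rfl | he
      · exact hxu
      rcases Finset.mem_insert.1 he with rfl | he
      · exact hyv
      · exact hM.1 e (Finset.mem_of_mem_erase he)
    · intro e he f hf hef w hw
      rcases Finset.mem_insert.1 he with rfl | he <;> rcases Finset.mem_insert.1 hf with rfl | hf
      · exact hef rfl
      · rcases Finset.mem_insert.1 hf with rfl | hf
        · exact h3 w hw
        · exact h1 f hf w hw
      · rcases Finset.mem_insert.1 he with rfl | he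
        · exact h3 w hw.symm
        · exact h1 e he w hw.symm
      · rcases Finset.mem_insert.1 he with rfl | he <;> rcases Finset.mem_insert.1 hf with rfl | hf
        · exact hef rfl
        · exact h2 f hf w hw
        · exact h2 e he w hw.symm
        · exact hM.2 e (Finset.mem_of_mem_erase he) f (Finset.mem_of_mem_erase hf) hef w hw)
  rw [Finset.card_insert_of_notMem n1, Finset.card_insert_of_notMem n2,
    Finset.card_erase_of_mem hxy] at this
  have := Finset.card_pos.2 ⟨_, hxy⟩
  omega

/-- number of unmatched neighbours -/
noncomputable def outDeg {V : Type*} [Fintype V] (G : SimpleGraph V) (M : Finset (Sym2 V))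
    (v : V) : ℕ := ((matchedSet M)ᶜ.filter (fun u => G.Adj v u)).card

lemma outDeg_le {V : Type*} [Fintype V] (G : SimpleGraph V) (M : Finset (Sym2 V))
    (v : V) : outDeg G M v ≤ G.degree v := by
  rw [outDeg, ← SimpleGraph.card_neighborFinset_eq_degree]
  apply Finset.card_le_card
  intro u hu
  simpa using (Finset.mem_filter.1 hu).2

lemma edge_choice {V : Type*} [Fintype V] (G : SimpleGraph V)
    (M : Finset (Sym2 V)) (hM : IsMatchingSet G M)
    (hmax : ∀ M' : Finset (Sym2 V), IsMatchingSet G M' → M'.card ≤ M.card)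
    (e : Sym2 V) (he : e ∈ M) :
    ∃ w ∈ e, ∑ v ∈ e.toFinset, outDeg G M v ≤ G.degree w := by
  induction e using Sym2.ind with
  | _ x y =>
  have hadj : G.Adj x y := hM.1 _ he
  rw [Sym2.toFinset_mk_eq, Finset.sum_pair hadj.ne]
  have hx := outDeg_le G M x
  have hy := outDeg_le G M y
  by_cases h0 : outDeg G M y = 0
  · exact ⟨x, Sym2.mem_mk_left x y, by omega⟩
  by_cases h1 : outDeg G M x = 0
  · exact ⟨y, Sym2.mem_mk_right x y, by omega⟩
  refine ⟨x, Sym2.mem_mk_left x y, ?_⟩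
  obtain ⟨v, hv⟩ := Finset.card_pos.1 (Nat.pos_of_ne_zero h0)
  obtain ⟨u, hu⟩ := Finset.card_pos.1 (Nat.pos_of_ne_zero h1)
  simp only [Finset.mem_filter, Finset.mem_compl] at hu hv
  have key := fun a b ha hb => no_augment G M hM hmax x y a b he ha hb
  have hx1 : outDeg G M x ≤ 1 := by
    refine Finset.card_le_one.2 fun a ha b hb => ?_
    simp only [Finset.mem_filter, Finset.mem_compl] at ha hb
    rw [key a v ha.1 hv.1 ha.2 hv.2, key b v hb.1 hv.1 hb.2 hv.2]
  have hy1 : outDeg G M y ≤ 1 := by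
    refine Finset.card_le_one.2 fun a ha b hb => ?_
    simp only [Finset.mem_filter, Finset.mem_compl] at ha hb
    rw [← key u a hu.1 ha.1 hu.2 ha.2, ← key u b hu.1 hb.1 hu.2 hb.2]
  have hyu : y ≠ u := by
    rintro rfl
    apply hu.1
    simp only [matchedSet, Finset.mem_filter, Finset.mem_univ, true_and]
    exact ⟨_, he, Sym2.mem_mk_right x y⟩
  have : 2 ≤ G.degree x := by
    rw [← Finset.card_pair hyu, ← SimpleGraph.card_neighborFinset_eq_degree]
    apply Finset.card_le_card
    intro a ha
    simp only [Finset.mem_insert, Finset.mem_singleton] at ha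
    rcases ha with rfl | rfl
    · simpa using hadj
    · simpa using hu.2
  omega

/-- Lower bound on the matching number: if `k = ν(G)` and `d` is the arranged
degree sequence of `G`, then `2(d₁+⋯+d_k) + (d_{k+1}+⋯+d_{2k}) ≥ 2m(G)`. -/
theorem matching_number_degree_inequality
    {V : Type*} [Fintype V] {n : ℕ} (G : SimpleGraph V)
    (d : Fin n → ℕ) (hd : Antitone d)
    (σ : Fin n ≃ V) (hσ : ∀ i, G.degree (σ i) = d i)
    (M : Finset (Sym2 V)) (hM : IsMatchingSet G M)
    (hmax : ∀ M' : Finset (Sym2 V), IsMatchingSet G M' → M'.card ≤ M.card) :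
    2 * G.edgeFinset.card ≤
      2 * (∑ i ∈ Finset.univ.filter (fun i : Fin n => (i : ℕ) < M.card), d i)
        + ∑ i ∈ Finset.univ.filter
            (fun i : Fin n => M.card ≤ (i : ℕ) ∧ (i : ℕ) < 2 * M.card), d i := by
  set k := M.card with hk
  have hVM : matchedSet M = M.biUnion Sym2.toFinset := by
    ext v; simp [matchedSet, Sym2.mem_toFinset]
  have hc : (matchedSet M).card ≤ 2 * k := by
    rw [hVM, hk, mul_comm]
    refine Finset.card_biUnion_le_card_mul _ _ _ fun e he => ?_
    rw [Sym2.card_toFinset]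
    split_ifs <;> omega
  have hA := top_deg_le G d hd σ hσ (2 * k) (matchedSet M) hc
  have hsplit : ∑ i ∈ Finset.univ.filter (fun i : Fin n => (i : ℕ) < 2 * k), d i =
      ∑ i ∈ Finset.univ.filter (fun i : Fin n => (i : ℕ) < k), d i +
      ∑ i ∈ Finset.univ.filter (fun i : Fin n => k ≤ (i : ℕ) ∧ (i : ℕ) < 2 * k), d i := by
    rw [← Finset.sum_union]
    · apply Finset.sum_congr _ (fun _ _ => rfl)
      ext i
      simp only [Finset.mem_union, Finset.mem_filter, Finset.mem_univ, true_and]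
      omega
    · rw [Finset.disjoint_left]
      intro i hi hj
      simp only [Finset.mem_filter, Finset.mem_univ, true_and] at hi hj
      omega
  have hB : ∑ v ∈ (matchedSet M)ᶜ, G.degree v ≤
      ∑ i ∈ Finset.univ.filter (fun i : Fin n => (i : ℕ) < k), d i := by
    have e1 : ∑ v ∈ (matchedSet M)ᶜ, G.degree v = ∑ v ∈ matchedSet M, outDeg G M v := by
      have := Finset.sum_card_bipartiteAbove_eq_sum_card_bipartiteBelow
        (s := matchedSet M) (t := (matchedSet M)ᶜ) G.Adj
      rw [show ∑ v ∈ matchedSet M, outDeg G M v = _ from this]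
      refine Finset.sum_congr rfl fun u hu => ?_
      rw [← SimpleGraph.card_neighborFinset_eq_degree]
      congr 1
      ext v
      simp only [SimpleGraph.mem_neighborFinset, Finset.mem_bipartiteBelow]
      refine ⟨fun h => ⟨?_, h.symm⟩, fun h => h.2.symm⟩
      by_contra hv
      exact uncovered_indep G M hM hmax u v (Finset.mem_compl.1 hu) hv h
    have hch : ∀ e : Sym2 V, ∃ w, (e ∈ M → w ∈ e) ∧
        (e ∈ M → ∑ v ∈ e.toFinset, outDeg G M v ≤ G.degree w) := by
      intro e
      by_cases he : e ∈ M
      · obtain ⟨w, h1, h2⟩ := edge_choice G M hM hmax e he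
        exact ⟨w, fun _ => h1, fun _ => h2⟩
      · exact ⟨e.out.1, fun h => absurd h he, fun h => absurd h he⟩
    choose f hf1 hf2 using hch
    have hinj : Set.InjOn f (M : Set (Sym2 V)) := by
      intro a ha b hb hab
      by_contra hne
      exact hM.2 a ha b hb hne (f a) ⟨hf1 a ha, hab ▸ hf1 b hb⟩
    have e2 : ∑ v ∈ matchedSet M, outDeg G M v = ∑ e ∈ M, ∑ v ∈ e.toFinset, outDeg G M v := by
      rw [hVM]
      apply Finset.sum_biUnion
      intro a ha b hb hne
      refine Finset.disjoint_left.2 fun v hv hw => ?_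
      exact hM.2 a ha b hb hne v ⟨Sym2.mem_toFinset.1 hv, Sym2.mem_toFinset.1 hw⟩
    rw [e1, e2]
    refine (Finset.sum_le_sum hf2).trans ?_
    rw [← Finset.sum_image (f := fun v => G.degree v) hinj]
    exact top_deg_le G d hd σ hσ k _ Finset.card_image_le
  have hsum := G.sum_degrees_eq_twice_card_edges
  have hs2 := Finset.sum_add_sum_compl (matchedSet M) (fun v => G.degree v)
  have hgoal : 2 * G.edgeFinset.card = ∑ v ∈ matchedSet M, G.degree v
      + ∑ v ∈ (matchedSet M)ᶜ, G.degree v := by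
    rw [hs2, hsum]
  omega
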